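/- Let F ⊆ E ⊆ K be finite fields with |F| = q, [E : F] = t and [K : E] = 2, and set f = 2t, so that [K : F] = f. Let ℓ be a prime not dividing q and let 𝔽̄_ℓ be an algebraic closure of the field with ℓ elements. Then there exists a group homomorphism ξ : Kˣ → 𝔽̄_ℓˣ which is trivial on Eˣ and satisfies ξ ∘ σ ≠ ξ for every nontrivial σ ∈ Gal(K/F), if and only if there exists a positive integer A coprime to ℓ such that A divides q^t + 1 and the multiplicative order of q modulo A equals f. -/

import Mathlib

/-!
The unit group `Kˣ` is cyclic, so a character `ξ` is determined by its value `z` at a generator `g`,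
and everything can be read off from the order `A` of `z`. The `m`-th power of the `q`-power
Frobenius carries `z` to `z ^ q ^ m`, hence fixes `ξ` exactly when `q ^ m = 1` modulo `A`; so `ξ` is
regular exactly when `q` has order `[K : F]` modulo `A`. The norm `Kˣ → Eˣ` is onto and raises to
the power `N = |Kˣ| / |Eˣ|`, so `ξ` is trivial on `Eˣ` exactly when `A ∣ N`. Finally, a separably
closed field contains a root of unity of order `A ≠ 0` exactly when `A` is invertible in it.
-/

open Subgroup

section Orders

theorem pow_eq_self_iff_natCast_eq_one {M : Type*} [LeftCancelMonoid M] (z : M) (n : ℕ) :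
    z ^ n = z ↔ (n : ZMod (orderOf z)) = 1 := by
  rw [← Nat.cast_one, ZMod.natCast_eq_natCast_iff, ← pow_eq_pow_iff_modEq, pow_one]

theorem exists_units_orderOf_eq_iff_natCast_ne_zero {Ω : Type*} [Field Ω] [IsSepClosed Ω] {n : ℕ}
    (hn : n ≠ 0) : (∃ z : Ωˣ, orderOf z = n) ↔ (n : Ω) ≠ 0 := by
  constructor
  · rintro ⟨z, rfl⟩
    have : NeZero (orderOf z) := ⟨hn⟩
    exact (IsPrimitiveRoot.coe_units_iff.mpr (IsPrimitiveRoot.orderOf z)).neZero'.ne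
  · intro hnΩ
    have : NeZero (n : Ω) := ⟨hnΩ⟩
    obtain ⟨ζ, hζ⟩ := HasEnoughRootsOfUnity.exists_primitiveRoot Ω n
    exact ⟨(hζ.isUnit hn).unit, (hζ.isUnit_unit hn).eq_orderOf.symm⟩

theorem natCast_ne_zero_iff_coprime {R : Type*} [AddMonoidWithOne R] {p : ℕ} [CharP R p]
    (hp : p.Prime) (n : ℕ) : (n : R) ≠ 0 ↔ n.Coprime p := by
  rw [Ne, CharP.cast_eq_zero_iff R p, ← hp.coprime_iff_not_dvd, Nat.coprime_comm]

end Orders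

section Regular

variable (F : Type*) {K M : Type*} [Field F] [Field K] [Algebra F K]

/-- A homomorphism `ξ` on `Kˣ` is `Gal(K/F)`-regular if no nontrivial `σ ∈ Gal(K/F)` fixes it under
precomposition. -/
def IsGaloisRegular [Monoid M] (ξ : Kˣ →* M) : Prop :=
  ∀ σ : Gal(K/F), σ ≠ 1 → ∃ x : Kˣ, ξ (Units.map (σ : K →* K) x) ≠ ξ x

variable {F}

theorem isGaloisRegular_iff_forall_comp_eq [Monoid M] {ξ : Kˣ →* M} :
    IsGaloisRegular F ξ ↔ ∀ σ : Gal(K/F), ξ.comp (Units.map (σ : K →* K)) = ξ → σ = 1 := by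
  simp only [IsGaloisRegular, DFunLike.ext_iff (F := Kˣ →* M), MonoidHom.comp_apply]
  exact forall_congr' fun σ ↦ by rw [← not_forall, not_imp_not]

theorem unitsMap_frobenius_pow [Fintype F] [Algebra.IsAlgebraic F K] (m : ℕ) (x : Kˣ) :
    Units.map ((FiniteField.frobeniusAlgEquivOfAlgebraic F K ^ m : Gal(K/F)) : K →* K) x =
      x ^ Fintype.card F ^ m := by
  ext
  simpa using! congrFun (FiniteField.coe_frobeniusAlgEquivOfAlgebraic_iterate F K m) x

variable [Group M] {g : Kˣ} (hg : ∀ x, x ∈ zpowers g)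

include hg

theorem comp_frobenius_pow_eq_iff [Fintype F] [Algebra.IsAlgebraic F K] (ξ : Kˣ →* M) (m : ℕ) :
    ξ.comp (Units.map ((FiniteField.frobeniusAlgEquivOfAlgebraic F K ^ m : Gal(K/F)) : K →* K)) =
      ξ ↔ (Nat.card F : ZMod (orderOf (ξ g))) ^ m = 1 := by
  rw [MonoidHom.eq_iff_eq_on_generator hg, MonoidHom.comp_apply, unitsMap_frobenius_pow, map_pow,
    pow_eq_self_iff_natCast_eq_one, Nat.cast_pow, Nat.card_eq_fintype_card]

theorem isGaloisRegular_iff_orderOf_natCard [Finite K] (ξ : Kˣ →* M) :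
    IsGaloisRegular F ξ ↔
      orderOf (Nat.card F : ZMod (orderOf (ξ g))) = Module.finrank F K := by
  have : Finite F := .of_injective _ (algebraMap F K).injective
  have : Fintype F := .ofFinite F
  let φ := FiniteField.frobeniusAlgEquivOfAlgebraic F K
  rw [isGaloisRegular_iff_forall_comp_eq,
    ← FiniteField.orderOf_frobeniusAlgEquivOfAlgebraic F K, orderOf_eq_orderOf_iff]
  constructor
  · intro h m
    rw [← comp_frobenius_pow_eq_iff hg]
    exact ⟨h (φ ^ m), fun hm ↦ by rw [hm]; rfl⟩
  · intro h σ hσ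
    obtain ⟨m, rfl⟩ := (FiniteField.bijective_frobeniusAlgEquivOfAlgebraic_pow F K).surjective σ
    exact (h m).mp ((comp_frobenius_pow_eq_iff hg ξ m).mp hσ)

end Regular

section Norm

variable {E K M : Type*} [Field E] [Field K] [Algebra E K] [Finite K]

theorem natCard_sub_one_div_dvd_natCard_units :
    (Nat.card K - 1) / (Nat.card E - 1) ∣ Nat.card Kˣ := by
  rw [Nat.card_units]
  apply Nat.div_dvd_of_dvd
  simpa only [Nat.card_units] using
    card_dvd_of_surjective _ (FiniteField.unitsMap_norm_surjective E K)

theorem natCard_sub_one_div_of_finrank_eq_two (h : Module.finrank E K = 2) :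
    (Nat.card K - 1) / (Nat.card E - 1) = Nat.card E + 1 := by
  have : Finite E := .of_injective _ (algebraMap E K).injective
  have hE : 1 < Nat.card E := Finite.one_lt_card
  rw [Module.natCard_eq_pow_finrank (K := E), h, ← Nat.geomSum_eq hE, geom_sum_two]

theorem units_mem_range_algebraMap_iff_exists_pow (x : Kˣ) :
    (x : K) ∈ Set.range (algebraMap E K) ↔
      ∃ y : Kˣ, y ^ ((Nat.card K - 1) / (Nat.card E - 1)) = x := by
  constructor
  · rintro ⟨e, he⟩
    have he0 : e ≠ 0 := by
      rintro rfl
      exact x.ne_zero (he.symm.trans (map_zero _))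
    obtain ⟨y, hy⟩ := FiniteField.unitsMap_norm_surjective E K (Units.mk0 e he0)
    refine ⟨y, Units.ext ?_⟩
    rw [Units.val_pow_eq_pow_val, ← FiniteField.algebraMap_norm_eq_pow, ← he]
    exact congrArg (algebraMap E K) (congrArg Units.val hy)
  · rintro ⟨y, rfl⟩
    exact ⟨Algebra.norm E (y : K), FiniteField.algebraMap_norm_eq_pow⟩

theorem forall_mem_range_algebraMap_map_eq_one_iff [Group M] {g : Kˣ} (hg : ∀ x, x ∈ zpowers g)
    (ξ : Kˣ →* M) :
    (∀ x : Kˣ, (x : K) ∈ Set.range (algebraMap E K) → ξ x = 1) ↔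
      orderOf (ξ g) ∣ (Nat.card K - 1) / (Nat.card E - 1) := by
  simp only [units_mem_range_algebraMap_iff_exists_pow, forall_exists_index,
    forall_apply_eq_imp_iff, orderOf_dvd_iff_pow_eq_one, ← map_pow]
  refine ⟨fun h ↦ h g, fun h y ↦ ?_⟩
  obtain ⟨k, rfl⟩ := mem_zpowers_iff.mp (hg y)
  rw [← zpow_natCast, zpow_comm, map_zpow, zpow_natCast, h, one_zpow]

end Norm

theorem exists_isGaloisRegular_iff_exists_orderOf (F E K M : Type*) [Field F] [Field E] [Field K]
    [Algebra F K] [Algebra E K] [Finite K] [Group M] :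
    (∃ ξ : Kˣ →* M, (∀ x : Kˣ, (x : K) ∈ Set.range (algebraMap E K) → ξ x = 1) ∧
        IsGaloisRegular F ξ) ↔
      ∃ z : M, orderOf z ∣ (Nat.card K - 1) / (Nat.card E - 1) ∧
        orderOf (Nat.card F : ZMod (orderOf z)) = Module.finrank F K := by
  obtain ⟨g, hg⟩ := IsCyclic.exists_generator (α := Kˣ)
  simp only [forall_mem_range_algebraMap_map_eq_one_iff hg, isGaloisRegular_iff_orderOf_natCard hg]
  refine ⟨fun ⟨ξ, hξ⟩ ↦ ⟨ξ g, hξ⟩, fun ⟨z, hz⟩ ↦ ?_⟩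
  have hzg : orderOf z ∣ orderOf g := by
    rw [orderOf_eq_card_of_forall_mem_zpowers hg]
    exact hz.1.trans natCard_sub_one_div_dvd_natCard_units
  exact ⟨monoidHomOfForallMemZpowers hg hzg, by rwa [monoidHomOfForallMemZpowers_apply_gen]⟩

theorem stmt_11_general (F E K Ω : Type*) [Field F] [Field E] [Field K] [Algebra F K] [Algebra E K]
    [Finite K] [Field Ω] [IsSepClosed Ω] :
    (∃ ξ : Kˣ →* Ωˣ, (∀ x : Kˣ, (x : K) ∈ Set.range (algebraMap E K) → ξ x = 1) ∧
        IsGaloisRegular F ξ) ↔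
      ∃ A : ℕ, (A : Ω) ≠ 0 ∧ A ∣ (Nat.card K - 1) / (Nat.card E - 1) ∧
        orderOf (Nat.card F : ZMod A) = Module.finrank F K := by
  rw [exists_isGaloisRegular_iff_exists_orderOf]
  have hN : (Nat.card K - 1) / (Nat.card E - 1) ≠ 0 :=
    ne_zero_of_dvd_ne_zero Nat.card_pos.ne' natCard_sub_one_div_dvd_natCard_units
  constructor
  · rintro ⟨z, hzN, hz⟩
    have hz0 : orderOf z ≠ 0 := ne_zero_of_dvd_ne_zero hN hzN
    exact ⟨orderOf z, (exists_units_orderOf_eq_iff_natCast_ne_zero hz0).mp ⟨z, rfl⟩, hzN, hz⟩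
  · rintro ⟨A, hAΩ, hAN, hA⟩
    have hA0 : A ≠ 0 := ne_zero_of_dvd_ne_zero hN hAN
    obtain ⟨z, rfl⟩ := (exists_units_orderOf_eq_iff_natCast_ne_zero hA0).mpr hAΩ
    exact ⟨z, hAN, hA⟩

/-- Let `F ⊆ E ⊆ K` be finite fields with `|F| = q`, `[E : F] = t` and `[K : E] = 2`, and
set `f = 2t`, so that `[K : F] = f`. Let `ℓ` be a prime not dividing `q` and let `Ω` be an
algebraic closure of the field with `ℓ` elements. Then there exists a group homomorphism
`ξ : Kˣ → Ωˣ` which is trivial on `Eˣ` and satisfies `ξ ∘ σ ≠ ξ` for every nontrivial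
`σ ∈ Gal(K/F)`, if and only if there exists a positive integer `A` coprime to `ℓ` such that
`A` divides `q^t + 1` and the multiplicative order of `q` modulo `A` equals `f`. -/
theorem stmt_11 (F E K : Type*) [Field F] [Field E] [Field K]
    [Algebra F E] [Algebra E K] [Algebra F K] [IsScalarTower F E K]
    [Fintype F] [Fintype E] [Fintype K]
    (q t f : ℕ) (hq : Fintype.card F = q)
    (ht : Module.finrank F E = t) (hKE : Module.finrank E K = 2) (hf : f = 2 * t)
    (ℓ : ℕ) [Fact ℓ.Prime] (hℓq : ¬ ℓ ∣ q)
    (Ω : Type*) [Field Ω] [Algebra (ZMod ℓ) Ω] [IsAlgClosure (ZMod ℓ) Ω] :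
    (∃ ξ : Kˣ →* Ωˣ,
        (∀ x : Kˣ, (x : K) ∈ Set.range (algebraMap E K) → ξ x = 1) ∧
        (∀ σ : K ≃ₐ[F] K, σ ≠ AlgEquiv.refl →
          ∃ x : Kˣ, ξ (Units.map σ.toAlgHom.toRingHom.toMonoidHom x) ≠ ξ x)) ↔
    (∃ A : ℕ, 0 < A ∧ A.Coprime ℓ ∧ A ∣ q ^ t + 1 ∧ orderOf (q : ZMod A) = f) := by
  have : CharP Ω ℓ := charP_of_injective_algebraMap' (ZMod ℓ) ℓ
  have : IsAlgClosed Ω := IsAlgClosure.isAlgClosed (ZMod ℓ)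
  have hE : Nat.card E = q ^ t := by
    rw [Module.natCard_eq_pow_finrank (K := F), Nat.card_eq_fintype_card, hq, ht]
  have hFK : Module.finrank F K = f := by
    rw [← Module.finrank_mul_finrank F E K, ht, hKE, hf, mul_comm]
  refine (stmt_11_general F E K Ω).trans (exists_congr fun A ↦ ?_)
  rw [natCast_ne_zero_iff_coprime Fact.out, natCard_sub_one_div_of_finrank_eq_two hKE, hE, hFK,
    Nat.card_eq_fintype_card, hq]
  exact ⟨fun h ↦ ⟨Nat.pos_of_dvd_of_pos h.2.1 (Nat.succ_pos _), h⟩, And.right⟩
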